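/- Let d = 1, let T, Ω ⊆ ℝ be measurable sets with 0 < |T| < ∞ and 0 < |Ω| < ∞, and let f ∈ L¹(ℝ) with f̂ ∈ L¹(ℝ), f ≠ 0. Suppose f is ε_T-concentrated on T and f̂ is ε_Ω-concentrated on Ω, where 0 ≤ ε_T, ε_Ω ≤ 1 and ε_T + ε_Ω ≤ 1. Then Δf · Δf̂ ≥ (1 − ε_T²)(1 − ε_Ω²) ‖f‖₂² / (4π² |T||Ω|), where Δf = (∫_ℝ |t|² |f(t)|² dt)^{1/2} and Δf̂ = (∫_ℝ |ω|² |f̂(ω)|² dω)^{1/2}. -/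

import Mathlib

open MeasureTheory FourierTransform
open scoped Real ENNReal

/-!
Write `N = ‖f‖₂ = ‖𝓕 f‖₂`. Concentration of `f` on `T` gives
`(1 - ε_T²) N² ≤ ∫_T |f|² ≤ |T| ‖f‖_∞²`, and Fourier inversion gives `‖f‖_∞ ≤ ‖𝓕 f‖₁`. Carlson's
inequality `‖g‖₁² ≤ 2π ‖g‖₂ Δg`, applied to `g = 𝓕 f`, then yields `(1 - ε_T²) N ≤ 2π |T| Δ(𝓕 f)`.
Exchanging the roles of `f` and `𝓕 f` yields `(1 - ε_Ω²) N ≤ 2π |Ω| Δf`, and the theorem is the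
product of the two bounds.

Carlson's inequality is Cauchy-Schwarz against the weight `1 + (a x)²`, optimised at
`a = ‖g‖₂ / Δg`.
-/

open scoped NNReal

section Lp

variable {α F : Type*} [MeasurableSpace α] {μ : Measure α} [NormedAddCommGroup F] {f : α → F}

lemma eLpNorm_two_sq (f : α → F) (μ : Measure α) :
    eLpNorm f 2 μ ^ 2 = ∫⁻ x, ‖f x‖ₑ ^ 2 ∂μ := by
  simpa using eLpNorm_nnreal_pow_eq_lintegral (f := f) (μ := μ) (p := 2) two_ne_zero

lemma eLpNorm_two_sq_le_eLpNorm_top_mul_eLpNorm_one (hf : AEStronglyMeasurable f μ) :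
    eLpNorm f 2 μ ^ 2 ≤ eLpNorm f ∞ μ * eLpNorm f 1 μ := by
  rw [eLpNorm_two_sq, eLpNorm_one_eq_lintegral_enorm, ← lintegral_const_mul'' _ hf.enorm]
  refine lintegral_mono_ae ?_
  filter_upwards [enorm_ae_le_eLpNormEssSup f μ] with x hx
  rw [sq, eLpNorm_exponent_top]
  gcongr

lemma memLp_two_of_memLp_one_of_memLp_top (h1 : MemLp f 1 μ) (htop : MemLp f ∞ μ) :
    MemLp f 2 μ := by
  refine ⟨h1.1, ?_⟩
  have hlt : eLpNorm f 2 μ ^ 2 < ∞ :=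
    (eLpNorm_two_sq_le_eLpNorm_top_mul_eLpNorm_one h1.1).trans_lt (ENNReal.mul_lt_top htop.2 h1.2)
  simpa using hlt

lemma ofReal_integral_norm_sq (hf : MemLp f 2 μ) :
    ENNReal.ofReal (∫ x, ‖f x‖ ^ 2 ∂μ) = eLpNorm f 2 μ ^ 2 := by
  rw [ofReal_integral_eq_lintegral_ofReal hf.norm.integrable_sq (ae_of_all _ fun _ ↦ sq_nonneg _),
    eLpNorm_two_sq]
  simp only [ENNReal.ofReal_pow (norm_nonneg _), ofReal_norm]

lemma ofReal_sqrt_integral_norm_sq (hf : MemLp f 2 μ) :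
    ENNReal.ofReal √(∫ x, ‖f x‖ ^ 2 ∂μ) = eLpNorm f 2 μ := by
  have hsq : ENNReal.ofReal √(∫ x, ‖f x‖ ^ 2 ∂μ) ^ 2 = eLpNorm f 2 μ ^ 2 := by
    rw [← ENNReal.ofReal_pow (Real.sqrt_nonneg _), Real.sq_sqrt (by positivity),
      ofReal_integral_norm_sq hf]
  exact (ENNReal.pow_right_strictMono two_ne_zero).injective hsq

lemma eLpNorm_one_sq_le_lintegral_inv_mul_lintegral (hf : AEStronglyMeasurable f μ) {w : α → ℝ≥0∞}
    (hw : AEMeasurable w μ) (hw_zero : ∀ x, w x ≠ 0) (hw_top : ∀ x, w x ≠ ∞) :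
    eLpNorm f 1 μ ^ 2 ≤ (∫⁻ x, (w x)⁻¹ ∂μ) * ∫⁻ x, w x * ‖f x‖ₑ ^ 2 ∂μ := by
  have hsplit (x : α) :
      ‖f x‖ₑ = (w x)⁻¹ ^ (1 / 2 : ℝ) * (w x * ‖f x‖ₑ ^ 2) ^ (1 / 2 : ℝ) := by
    rw [← ENNReal.mul_rpow_of_nonneg _ _ (by norm_num), ← mul_assoc,
      ENNReal.inv_mul_cancel (hw_zero x) (hw_top x), one_mul, ← ENNReal.rpow_two,
      ← ENNReal.rpow_mul]
    norm_num
  calc eLpNorm f 1 μ ^ 2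
      = (∫⁻ x, (w x)⁻¹ ^ (1 / 2 : ℝ) * (w x * ‖f x‖ₑ ^ 2) ^ (1 / 2 : ℝ) ∂μ) ^ 2 := by
        rw [eLpNorm_one_eq_lintegral_enorm, lintegral_congr hsplit]
    _ ≤ ((∫⁻ x, (w x)⁻¹ ∂μ) ^ (1 / 2 : ℝ) *
          (∫⁻ x, w x * ‖f x‖ₑ ^ 2 ∂μ) ^ (1 / 2 : ℝ)) ^ 2 := by
        gcongr
        exact ENNReal.lintegral_mul_norm_pow_le hw.inv (hw.mul (hf.enorm.pow_const 2))
          (by norm_num) (by norm_num) (by norm_num)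
    _ = (∫⁻ x, (w x)⁻¹ ∂μ) * ∫⁻ x, w x * ‖f x‖ₑ ^ 2 ∂μ := by
        rw [← ENNReal.mul_rpow_of_nonneg _ _ (by norm_num), ← ENNReal.rpow_two,
          ← ENNReal.rpow_mul]
        norm_num

end Lp

section Concentration

variable {α F : Type*} [MeasurableSpace α] {μ : Measure α} [NormedAddCommGroup F] {f : α → F}

/-- `f` is `ε`-concentrated on `U`: the `L²` norm of `f` outside `U` is at most `ε ‖f‖₂`. The norms
are valued in `ℝ≥0∞`, so this is meaningful without assuming `f ∈ L²`. -/
def IsConcentratedOn (f : α → F) (ε : ℝ) (U : Set α)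
    (μ : Measure α := by volume_tac) : Prop :=
  eLpNorm f 2 (μ.restrict Uᶜ) ≤ ENNReal.ofReal ε * eLpNorm f 2 μ

variable {ε : ℝ} {U : Set α}

lemma isConcentratedOn_of_sqrt_integral_le (hf : MemLp f 2 μ) (hε : 0 ≤ ε)
    (h : √(∫ x in Uᶜ, ‖f x‖ ^ 2 ∂μ) ≤ ε * √(∫ x, ‖f x‖ ^ 2 ∂μ)) : IsConcentratedOn f ε U μ := by
  rw [IsConcentratedOn, ← ofReal_sqrt_integral_norm_sq hf, ← ENNReal.ofReal_mul hε,
    ← ofReal_sqrt_integral_norm_sq (hf.restrict Uᶜ)]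
  exact ENNReal.ofReal_le_ofReal h

lemma IsConcentratedOn.one_sub_sq_mul_eLpNorm_sq_le (h : IsConcentratedOn f ε U μ) (hε : 0 ≤ ε)
    (hf : eLpNorm f 2 μ ≠ ∞) :
    ENNReal.ofReal (1 - ε ^ 2) * eLpNorm f 2 μ ^ 2 ≤ μ U * eLpNorm f ∞ μ ^ 2 := by
  have hU : eLpNorm f 2 (μ.restrict U) ^ 2 ≤ μ U * eLpNorm f ∞ μ ^ 2 := by
    rw [eLpNorm_two_sq, mul_comm, ← setLIntegral_const]
    refine lintegral_mono_ae (ae_restrict_of_ae ?_)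
    filter_upwards [enorm_ae_le_eLpNormEssSup f μ] with x hx
    rw [eLpNorm_exponent_top]
    gcongr
  have hsplit : eLpNorm f 2 μ ^ 2 ≤ μ U * eLpNorm f ∞ μ ^ 2 +
      ENNReal.ofReal (ε ^ 2) * eLpNorm f 2 μ ^ 2 := by
    calc eLpNorm f 2 μ ^ 2
        ≤ eLpNorm f 2 (μ.restrict U) ^ 2 + eLpNorm f 2 (μ.restrict Uᶜ) ^ 2 := by
          simpa [eLpNorm_two_sq] using lintegral_union_le (μ := μ) (fun x ↦ ‖f x‖ₑ ^ 2) U Uᶜ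
      _ ≤ μ U * eLpNorm f ∞ μ ^ 2 + (ENNReal.ofReal ε * eLpNorm f 2 μ) ^ 2 := by
          gcongr; exact h
      _ = _ := by rw [mul_pow, ENNReal.ofReal_pow hε]
  rw [ENNReal.ofReal_sub _ (sq_nonneg ε), ENNReal.ofReal_one,
    ENNReal.sub_mul fun _ _ ↦ ENNReal.pow_ne_top hf, one_mul]
  exact tsub_le_iff_right.mpr hsplit

end Concentration

section Carlson

variable {F : Type*} [NormedAddCommGroup F] [NormedSpace ℝ F] {g : ℝ → F}

/-- The standard deviation `Δg = (∫ |t|² |g t|² dt)^{1/2}` about the origin, not normalised by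
`‖g‖₂`. It is valued in `ℝ≥0∞` so that an infinite second moment is recorded as `∞`. -/
noncomputable def stdDev (g : ℝ → F) : ℝ≥0∞ := eLpNorm (fun t ↦ t • g t) 2

lemma stdDev_eq_lintegral (g : ℝ → F) :
    stdDev g = (∫⁻ t, ENNReal.ofReal (t ^ 2 * ‖g t‖ ^ 2)) ^ ((1 : ℝ) / 2) := by
  have (t : ℝ) : ENNReal.ofReal (t ^ 2 * ‖g t‖ ^ 2) = ‖t • g t‖ₑ ^ (2 : ℝ) := by
    rw [ENNReal.rpow_two, ← ofReal_norm, ← ENNReal.ofReal_pow (norm_nonneg _), norm_smul, mul_pow,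
      Real.norm_eq_abs, sq_abs]
  simp only [this, stdDev, eLpNorm_eq_lintegral_rpow_enorm_toReal two_ne_zero ENNReal.ofNat_ne_top,
    ENNReal.toReal_ofNat]

lemma stdDev_eq_zero_iff (hg : AEStronglyMeasurable g) : stdDev g = 0 ↔ g =ᵐ[volume] 0 := by
  rw [stdDev, eLpNorm_eq_zero_iff (by fun_prop) two_ne_zero]
  have h0 : ∀ᵐ t : ℝ, t ≠ 0 := Measure.ae_ne volume 0
  constructor <;> intro h <;> filter_upwards [h, h0] with t ht ht0
  · simpa [ht0] using ht
  · simp [ht]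

lemma lintegral_inv_one_add_mul_sq {a : ℝ≥0} (ha : a ≠ 0) :
    ∫⁻ x : ℝ, (1 + (a * ‖x‖ₑ) ^ 2)⁻¹ = ENNReal.ofReal (π / a) := by
  have hint : Integrable fun x : ℝ ↦ (1 + (a * x) ^ 2)⁻¹ :=
    integrable_inv_one_add_sq.comp_mul_left' (NNReal.coe_ne_zero.mpr ha)
  have hval : ∫ x : ℝ, (1 + (a * x) ^ 2)⁻¹ = π / a := by
    rw [Measure.integral_comp_mul_left (fun x : ℝ ↦ (1 + x ^ 2)⁻¹) a,
      integral_univ_inv_one_add_sq, abs_of_nonneg (by positivity), smul_eq_mul, inv_mul_eq_div]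
  rw [← hval, ofReal_integral_eq_lintegral_ofReal hint (ae_of_all _ fun x ↦ by positivity)]
  refine lintegral_congr fun x ↦ ?_
  rw [ENNReal.ofReal_inv_of_pos (by positivity), ENNReal.ofReal_add zero_le_one (by positivity),
    ← sq_abs, ENNReal.ofReal_pow (abs_nonneg _), abs_mul, ENNReal.ofReal_mul (abs_nonneg _)]
  simp [← Real.norm_eq_abs]

lemma eLpNorm_one_sq_le_of_dilation (hg : AEStronglyMeasurable g) {a : ℝ≥0} (ha : a ≠ 0) :
    eLpNorm g 1 ^ 2 ≤ ENNReal.ofReal (π / a) * (eLpNorm g 2 ^ 2 + a ^ 2 * stdDev g ^ 2) := by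
  have hmoment : ∫⁻ x : ℝ, (1 + (a * ‖x‖ₑ) ^ 2) * ‖g x‖ₑ ^ 2
      = eLpNorm g 2 ^ 2 + a ^ 2 * stdDev g ^ 2 := by
    simp only [stdDev, eLpNorm_two_sq, add_mul, one_mul, enorm_smul, mul_pow, mul_assoc]
    rw [lintegral_add_left' (by fun_prop), lintegral_const_mul'' _ (by fun_prop)]
  rw [← hmoment, ← lintegral_inv_one_add_mul_sq ha]
  exact eLpNorm_one_sq_le_lintegral_inv_mul_lintegral hg (by fun_prop)
    (fun x ↦ by simp) (fun x ↦ by finiteness)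

lemma eLpNorm_one_sq_le_two_pi_mul (hg : AEStronglyMeasurable g) :
    eLpNorm g 1 ^ 2 ≤ ENNReal.ofReal (2 * π) * (eLpNorm g 2 * stdDev g) := by
  by_cases hg0 : g =ᵐ[volume] 0
  · simp [eLpNorm_congr_ae hg0]
  have hn0 : eLpNorm g 2 ≠ 0 := mt (eLpNorm_eq_zero_iff hg two_ne_zero).mp hg0
  have hd0 : stdDev g ≠ 0 := mt (stdDev_eq_zero_iff hg).mp hg0
  by_cases hn : eLpNorm g 2 = ∞
  · simp [hn, hd0, ENNReal.mul_top, Real.pi_pos]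
  by_cases hd : stdDev g = ∞
  · simp [hd, hn0, ENNReal.mul_top, Real.pi_pos]
  generalize hN : eLpNorm g 2 = N at *
  generalize hD : stdDev g = D at *
  lift N to ℝ≥0 using hn
  lift D to ℝ≥0 using hd
  rw [ENNReal.coe_ne_zero] at hn0 hd0
  calc eLpNorm g 1 volume ^ 2
      ≤ ENNReal.ofReal (π / ↑(N / D)) * (N ^ 2 + ↑(N / D) ^ 2 * D ^ 2) := by
        simpa only [hN, hD] using eLpNorm_one_sq_le_of_dilation hg (div_ne_zero hn0 hd0)
    _ = ENNReal.ofReal (π / (N / D)) * ENNReal.ofReal (N ^ 2 + (N / D) ^ 2 * D ^ 2) := by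
        rw [← NNReal.coe_div]
        congr 1
        norm_cast
        rw [ENNReal.ofReal_coe_nnreal]
    _ = ENNReal.ofReal (2 * π) * (N * D) := by
        rw [← ENNReal.coe_mul, ← ENNReal.ofReal_coe_nnreal, ← ENNReal.ofReal_mul (by positivity),
          ← ENNReal.ofReal_mul (by positivity), NNReal.coe_mul]
        congr 1
        have hN0 : (N : ℝ) ≠ 0 := NNReal.coe_ne_zero.mpr hn0
        have hD0 : (D : ℝ) ≠ 0 := NNReal.coe_ne_zero.mpr hd0
        field_simp
        ring

lemma IsConcentratedOn.one_sub_sq_mul_eLpNorm_le {E : Type*} [NormedAddCommGroup E] {f : ℝ → E}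
    {ε : ℝ} {U : Set ℝ} (hf : IsConcentratedOn f ε U) (hε : 0 ≤ ε) (hf_top : eLpNorm f 2 ≠ ∞)
    (hg : AEStronglyMeasurable g) (hsup : eLpNorm f ∞ ≤ eLpNorm g 1)
    (hnorm : eLpNorm g 2 = eLpNorm f 2) :
    ENNReal.ofReal (1 - ε ^ 2) * eLpNorm f 2 ≤ ENNReal.ofReal (2 * π) * (volume U * stdDev g) := by
  by_cases hf_zero : eLpNorm f 2 = 0
  · simp [hf_zero]
  refine (ENNReal.mul_le_mul_iff_left hf_zero hf_top).mp ?_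
  calc ENNReal.ofReal (1 - ε ^ 2) * eLpNorm f 2 volume * eLpNorm f 2 volume
      = ENNReal.ofReal (1 - ε ^ 2) * eLpNorm f 2 volume ^ 2 := by ring
    _ ≤ volume U * eLpNorm f ∞ volume ^ 2 := hf.one_sub_sq_mul_eLpNorm_sq_le hε hf_top
    _ ≤ volume U * eLpNorm g 1 volume ^ 2 := by gcongr
    _ ≤ volume U * (ENNReal.ofReal (2 * π) * (eLpNorm f 2 volume * stdDev g)) := by
        gcongr
        exact hnorm ▸ eLpNorm_one_sq_le_two_pi_mul hg
    _ = ENNReal.ofReal (2 * π) * (volume U * stdDev g) * eLpNorm f 2 volume := by ring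

end Carlson

section Fourier

variable {V E : Type*} [NormedAddCommGroup V] [InnerProductSpace ℝ V] [FiniteDimensional ℝ V]
  [MeasurableSpace V] [BorelSpace V] [NormedAddCommGroup E]

section Banach

variable [NormedSpace ℂ E]

lemma enorm_fourier_le_eLpNorm_one (f : V → E) (w : V) : ‖𝓕 f w‖ₑ ≤ eLpNorm f 1 := by
  rw [Real.fourier_eq, eLpNorm_one_eq_lintegral_enorm]
  refine (enorm_integral_le_lintegral_enorm _).trans_eq (lintegral_congr fun v ↦ ?_)
  rw [← ofReal_norm, Circle.norm_smul, ofReal_norm]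

lemma eLpNorm_top_fourier_le (f : V → E) : eLpNorm (𝓕 f) ∞ ≤ eLpNorm f 1 :=
  eLpNormEssSup_le_of_ae_enorm_bound (ae_of_all _ (enorm_fourier_le_eLpNorm_one f))

lemma memLp_two_fourier {f : V → E} (hf : Integrable f) (hFf : Integrable (𝓕 f)) :
    MemLp (𝓕 f) 2 :=
  memLp_two_of_memLp_one_of_memLp_top (memLp_one_iff_integrable.mpr hFf)
    ⟨hFf.aestronglyMeasurable, (eLpNorm_top_fourier_le f).trans_lt
      (memLp_one_iff_integrable.mpr hf).2⟩

lemma continuous_fourierInv {f : V → E} (hf : Integrable f) : Continuous (𝓕⁻ f) := by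
  rw [Real.fourierInv_eq_fourier_comp_neg]
  exact VectorFourier.fourierIntegral_continuous Real.continuous_fourierChar
    (L := innerₗ V) continuous_inner hf.comp_neg

variable [CompleteSpace E]

lemma integral_fourier_smul_eq {φ : V → ℂ} {f : V → E} (hφ : Integrable φ) (hf : Integrable f) :
    ∫ w, 𝓕 φ w • f w = ∫ v, φ v • 𝓕 f v := by
  have h := VectorFourier.integral_fourierIntegral_smul_eq_flip (L := innerₗ V)
    Real.continuous_fourierChar continuous_inner hφ hf
  rwa [flip_innerₗ] at h

lemma integral_fourierInv_smul_eq {φ : V → ℂ} {f : V → E} (hφ : Integrable φ)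
    (hf : Integrable f) : ∫ w, 𝓕⁻ φ w • f w = ∫ v, φ v • 𝓕⁻ f v := by
  calc ∫ w, 𝓕⁻ φ w • f w = ∫ w, 𝓕 φ w • f (-w) := by
        rw [← integral_neg_eq_self]; simp [Real.fourierInv_eq_fourier_neg]
    _ = ∫ v, φ v • 𝓕⁻ f v := by
        rw [integral_fourier_smul_eq hφ hf.comp_neg, Real.fourierInv_eq_fourier_comp_neg]

lemma ae_eq_fourierInv_fourier {f : V → E} (hf : Integrable f)
    (hFf : Integrable (𝓕 f)) : f =ᵐ[volume] 𝓕⁻ (𝓕 f) := by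
  refine ae_eq_of_integral_contDiff_smul_eq hf.locallyIntegrable
    (continuous_fourierInv hFf).locallyIntegrable fun g hg hg_supp ↦ ?_
  have hg_supp' : HasCompactSupport (fun v ↦ (g v : ℂ)) := hg_supp.comp_left Complex.ofReal_zero
  let φ : SchwartzMap V ℂ := hg_supp'.toSchwartzMap (Complex.ofRealCLM.contDiff.comp hg)
  have hφ (h : V → E) (v : V) : φ v • h v = g v • h v := Complex.coe_smul _ _
  have hφ_inv : 𝓕 (𝓕⁻ (φ : V → ℂ)) = φ := by
    rw [← SchwartzMap.fourierInv_coe, ← SchwartzMap.fourier_coe, fourier_fourierInv_eq]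
  have hφ_int : Integrable (𝓕⁻ (φ : V → ℂ)) := by
    rw [← SchwartzMap.fourierInv_coe]; exact SchwartzMap.integrable _
  calc ∫ v, g v • f v = ∫ v, 𝓕 (𝓕⁻ (φ : V → ℂ)) v • f v := by simp only [hφ_inv, hφ]
    _ = ∫ w, 𝓕⁻ (φ : V → ℂ) w • 𝓕 f w := integral_fourier_smul_eq hφ_int hf
    _ = ∫ v, φ v • 𝓕⁻ (𝓕 f) v := integral_fourierInv_smul_eq φ.integrable hFf
    _ = ∫ v, g v • 𝓕⁻ (𝓕 f) v := by simp only [hφ]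

lemma eLpNorm_top_le_eLpNorm_one_fourier {f : V → E} (hf : Integrable f)
    (hFf : Integrable (𝓕 f)) : eLpNorm f ∞ ≤ eLpNorm (𝓕 f) 1 := by
  refine eLpNormEssSup_le_of_ae_enorm_bound ?_
  filter_upwards [ae_eq_fourierInv_fourier hf hFf] with v hv
  rw [hv, Real.fourierInv_eq_fourier_neg]
  exact enorm_fourier_le_eLpNorm_one _ _

lemma memLp_two_of_integrable_fourier {f : V → E} (hf : Integrable f)
    (hFf : Integrable (𝓕 f)) : MemLp f 2 :=
  memLp_two_of_memLp_one_of_memLp_top (memLp_one_iff_integrable.mpr hf)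
    ⟨hf.aestronglyMeasurable, (eLpNorm_top_le_eLpNorm_one_fourier hf hFf).trans_lt
      (memLp_one_iff_integrable.mpr hFf).2⟩

end Banach

lemma eLpNorm_two_fourier [InnerProductSpace ℂ E] [CompleteSpace E] {f : V → E}
    (hf : Integrable f) (hFf : Integrable (𝓕 f)) : eLpNorm (𝓕 f) 2 = eLpNorm f 2 := by
  have hinner : ∫ w, inner ℂ (𝓕 f w) (𝓕 f w) = ∫ v, inner ℂ (f v) (f v) := by
    calc ∫ w, inner ℂ (𝓕 f w) (𝓕 f w) = ∫ v, inner ℂ (f v) (𝓕⁻ (𝓕 f) v) := by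
          have h := VectorFourier.integral_sesq_fourierIntegral_eq_neg_flip (innerSL ℂ)
            (L := innerₗ V) Real.continuous_fourierChar continuous_inner hf hFf
          rwa [flip_innerₗ] at h
      _ = ∫ v, inner ℂ (f v) (f v) := by
          refine integral_congr_ae ?_
          filter_upwards [ae_eq_fourierInv_fourier hf hFf] with v hv
          rw [← hv]
  have hnorm : ∫ w, ‖𝓕 f w‖ ^ 2 = ∫ v, ‖f v‖ ^ 2 := by
    simp only [inner_self_eq_norm_sq_to_K, ← RCLike.ofReal_pow, integral_ofReal] at hinner
    exact RCLike.ofReal_injective hinner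
  rw [← ofReal_sqrt_integral_norm_sq (memLp_two_fourier hf hFf), hnorm,
    ofReal_sqrt_integral_norm_sq (memLp_two_of_integrable_fourier hf hFf)]

end Fourier

theorem heisenberg_epsilon_concentration_general {E : Type*} [NormedAddCommGroup E]
    [InnerProductSpace ℂ E] [CompleteSpace E] {f : ℝ → E} (hf : Integrable f)
    (hFf : Integrable (𝓕 f)) {T Ω : Set ℝ} {εT εΩ : ℝ} (hεT0 : 0 ≤ εT) (hεT1 : εT ≤ 1)
    (hεΩ0 : 0 ≤ εΩ) (hεΩ1 : εΩ ≤ 1)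
    (hconcT : √(∫ x in Tᶜ, ‖f x‖ ^ 2) ≤ εT * √(∫ x, ‖f x‖ ^ 2))
    (hconcΩ : √(∫ ω in Ωᶜ, ‖𝓕 f ω‖ ^ 2) ≤ εΩ * √(∫ ω, ‖𝓕 f ω‖ ^ 2)) :
    ENNReal.ofReal ((1 - εT ^ 2) * (1 - εΩ ^ 2) * (∫ t, ‖f t‖ ^ 2) / (4 * π ^ 2)) ≤
      (∫⁻ t, ENNReal.ofReal (t ^ 2 * ‖f t‖ ^ 2)) ^ ((1 : ℝ) / 2) *
        (∫⁻ ω, ENNReal.ofReal (ω ^ 2 * ‖𝓕 f ω‖ ^ 2)) ^ ((1 : ℝ) / 2) *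
        (volume T * volume Ω) := by
  have hf2 := memLp_two_of_integrable_fourier hf hFf
  have hFf2 := memLp_two_fourier hf hFf
  have hplancherel := eLpNorm_two_fourier hf hFf
  have hboundT := (isConcentratedOn_of_sqrt_integral_le hf2 hεT0 hconcT).one_sub_sq_mul_eLpNorm_le
    hεT0 hf2.eLpNorm_ne_top hFf.aestronglyMeasurable (eLpNorm_top_le_eLpNorm_one_fourier hf hFf)
    hplancherel
  have hboundΩ := (isConcentratedOn_of_sqrt_integral_le hFf2 hεΩ0 hconcΩ).one_sub_sq_mul_eLpNorm_le
    hεΩ0 hFf2.eLpNorm_ne_top hf.aestronglyMeasurable (eLpNorm_top_fourier_le f) hplancherel.symm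
  rw [hplancherel] at hboundΩ
  have hT : 0 ≤ 1 - εT ^ 2 := sub_nonneg.mpr (pow_le_one₀ hεT0 hεT1)
  have hΩ : 0 ≤ 1 - εΩ ^ 2 := sub_nonneg.mpr (pow_le_one₀ hεΩ0 hεΩ1)
  rw [← stdDev_eq_lintegral, ← stdDev_eq_lintegral, ENNReal.ofReal_div_of_pos (by positivity),
    ENNReal.ofReal_mul (by positivity), ENNReal.ofReal_mul hT, ofReal_integral_norm_sq hf2]
  refine ENNReal.div_le_of_le_mul ?_
  have hconst : ENNReal.ofReal (4 * π ^ 2) = ENNReal.ofReal (2 * π) * ENNReal.ofReal (2 * π) := by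
    rw [← ENNReal.ofReal_mul (by positivity)]; ring_nf
  calc ENNReal.ofReal (1 - εT ^ 2) * ENNReal.ofReal (1 - εΩ ^ 2) * eLpNorm f 2 volume ^ 2
      = ENNReal.ofReal (1 - εT ^ 2) * eLpNorm f 2 volume *
          (ENNReal.ofReal (1 - εΩ ^ 2) * eLpNorm f 2 volume) := by ring
    _ ≤ ENNReal.ofReal (2 * π) * (volume T * stdDev (𝓕 f)) *
          (ENNReal.ofReal (2 * π) * (volume Ω * stdDev f)) := mul_le_mul' hboundT hboundΩ
    _ = stdDev f * stdDev (𝓕 f) * (volume T * volume Ω) * ENNReal.ofReal (4 * π ^ 2) := by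
        rw [hconst]; ring

/-- **An ε-concentration version of the Heisenberg uncertainty principle.** For `d = 1`,
if `f ∈ L¹(ℝ)` with `𝓕f ∈ L¹(ℝ)`, `f ≠ 0`, is `ε_T`-concentrated on `T` and `𝓕f` is
`ε_Ω`-concentrated on `Ω`, where `0 < |T| < ∞`, `0 < |Ω| < ∞`, `0 ≤ ε_T, ε_Ω ≤ 1` and
`ε_T + ε_Ω ≤ 1`, then `Δf · Δ𝓕f ≥ (1-ε_T²)(1-ε_Ω²)‖f‖₂² / (4π²|T||Ω|)`, where
`Δf = (∫ t²|f(t)|² dt)^{1/2}` and `Δ𝓕f = (∫ ω²|𝓕f(ω)|² dω)^{1/2}` (the standard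
deviations are computed in `ℝ≥0∞`, so the inequality also covers the case of infinite
standard deviation). -/
theorem heisenberg_epsilon_concentration
    (T Ω : Set ℝ) (hT : MeasurableSet T) (hΩ : MeasurableSet Ω)
    (hTpos : 0 < volume T) (hTfin : volume T < ⊤)
    (hΩpos : 0 < volume Ω) (hΩfin : volume Ω < ⊤)
    (f : ℝ → ℂ)
    (hf1 : Integrable f volume) (hfhat1 : Integrable (𝓕 f) volume)
    (hf0 : ¬ f =ᵐ[volume] 0)
    (εT εΩ : ℝ) (hεT0 : 0 ≤ εT) (hεT1 : εT ≤ 1) (hεΩ0 : 0 ≤ εΩ) (hεΩ1 : εΩ ≤ 1)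
    (hsum : εT + εΩ ≤ 1)
    (hconcT : Real.sqrt (∫ x in Tᶜ, ‖f x‖ ^ 2) ≤ εT * Real.sqrt (∫ x, ‖f x‖ ^ 2))
    (hconcΩ : Real.sqrt (∫ ω in Ωᶜ, ‖𝓕 f ω‖ ^ 2) ≤ εΩ * Real.sqrt (∫ ω, ‖𝓕 f ω‖ ^ 2)) :
    ENNReal.ofReal ((1 - εT ^ 2) * (1 - εΩ ^ 2) * (∫ t, ‖f t‖ ^ 2) / (4 * π ^ 2)) /
        (volume T * volume Ω) ≤
      (∫⁻ t, ENNReal.ofReal (t ^ 2 * ‖f t‖ ^ 2)) ^ ((1 : ℝ) / 2) *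
        (∫⁻ ω, ENNReal.ofReal (ω ^ 2 * ‖𝓕 f ω‖ ^ 2)) ^ ((1 : ℝ) / 2) :=
  ENNReal.div_le_of_le_mul (heisenberg_epsilon_concentration_general hf1 hfhat1 hεT0 hεT1
    hεΩ0 hεΩ1 hconcT hconcΩ)
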